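/- Let 0<p<1 and let (x_n)_{n∈ℕ} together with (x_n*)_{n∈ℕ} be a quasi-greedy basis of ℓ_p. Then the basis is almost greedy: there is a constant C ≥ 1 such that for every f ∈ ℓ_p, every m ≥ 1, and every greedy set A of f with |A| = m, ‖f − S_A f‖_p ≤ C · inf{ ‖f − S_B f‖_p : B ⊆ ℕ, |B| = m }. -/

import Mathlib

open scoped BigOperators

open scoped BigOperators

/-- For `0 < p < 1`, membership in `ℓ_p`: the sequence `(|f j|^p)_j` is summable. -/
def MemLpSeq (p : ℝ) (f : ℕ → ℝ) : Prop := Summable fun j => |f j| ^ p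

/-- The `p`-norm `‖f‖_p = (∑_j |f j|^p)^(1/p)`. -/
noncomputable def pNorm (p : ℝ) (f : ℕ → ℝ) : ℝ := (∑' j, |f j| ^ p) ^ (1 / p)

/-- `A` is a greedy set for the coefficient sequence `coef`. -/
def GreedySet (coef : ℕ → ℝ) (A : Finset ℕ) : Prop :=
  ∀ n ∈ A, ∀ k ∉ A, |coef k| ≤ |coef n|

/-- `(x_n)` together with bounded linear functionals `(x_n^*)` is a basis of `ℓ_p`. -/
structure IsLpBasis (p : ℝ) (x : ℕ → ℕ → ℝ) (xs : ℕ → (ℕ → ℝ) → ℝ) : Prop where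
  mem : ∀ n, MemLpSeq p (x n)
  map_add : ∀ n f g, MemLpSeq p f → MemLpSeq p g → xs n (f + g) = xs n f + xs n g
  map_smul : ∀ n (c : ℝ) (f : ℕ → ℝ), MemLpSeq p f → xs n (fun j => c * f j) = c * xs n f
  bdd : ∃ b : ℝ, ∀ n f, MemLpSeq p f → |xs n f| ≤ b * pNorm p f
  biorth : ∀ m n, xs m (x n) = if m = n then (1 : ℝ) else 0
  dense : ∀ f, MemLpSeq p f → ∀ ε > 0, ∃ (A : Finset ℕ) (c : ℕ → ℝ),
    pNorm p (fun j => f j - ∑ n ∈ A, c n * x n j) < ε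
  norm_lb : ∃ c > 0, ∀ n, c ≤ pNorm p (x n)
  norm_ub : ∃ C : ℝ, ∀ n, pNorm p (x n) ≤ C

/-- The basis is quasi-greedy: greedy projections are uniformly bounded. -/
def QuasiGreedy (p : ℝ) (x : ℕ → ℕ → ℝ) (xs : ℕ → (ℕ → ℝ) → ℝ) : Prop :=
  ∃ C ≥ (1 : ℝ), ∀ f, MemLpSeq p f → ∀ A : Finset ℕ,
    GreedySet (fun n => xs n f) A →
    pNorm p (fun j => ∑ n ∈ A, xs n f * x n j) ≤ C * pNorm p f

/-!
Truncation quasi-greediness, which holds for every quasi-greedy basis, reduces the theorem to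
democracy: `‖∑ n ∈ D, x n‖ ^ p` must be comparable to `#D`. The upper estimate is the triangle
inequality for `‖·‖ ^ p`. For the lower one, expand `1 = xs n (x n) = ∑ j, x n j * xs n (e j)` in
the unit vectors `e j`. Since `p < 1`, the terms with `x n j` or `xs n (e j)` small are
negligible, so that for some `j = J n` both factors are bounded below uniformly in `n`. Truncation
quasi-greediness applied to `e j` shows that `J` is boundedly many-to-one, and quasi-greediness
together with an average over the sums `∑ n ∈ T, x n`, `T ⊆ D`, bounds the number of values of `J`
on `D` by a multiple of `‖∑ n ∈ D, x n‖ ^ p`.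
-/

open Filter Topology Finset

lemma exists_abs_eq_one_and_abs_mul_eq (a : ℝ) : ∃ ε : ℝ, |ε| = 1 ∧ |a| * ε = a := by
  rcases le_total 0 a with ha | ha
  · exact ⟨1, abs_one, by rw [abs_of_nonneg ha, mul_one]⟩
  · exact ⟨-1, by simp, by rw [abs_of_nonpos ha, neg_mul_neg, mul_one]⟩

lemma exists_pos_mul_rpow_lt (c : ℝ) {r ε : ℝ} (hr : 0 < r) (hε : 0 < ε) :
    ∃ s > 0, c * s ^ r < ε := by
  have hcont : ContinuousAt (fun s : ℝ => c * s ^ r) 0 :=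
    continuousAt_const.mul (Real.continuousAt_rpow_const 0 r (Or.inr hr.le))
  have hsmall : ∀ᶠ s in 𝓝[>] (0 : ℝ), c * s ^ r < ε :=
    (hcont.eventually_lt_const (by simpa [Real.zero_rpow hr.ne'] using hε)).filter_mono
      nhdsWithin_le_nhds
  obtain ⟨s, hs, hs0⟩ := (hsmall.and self_mem_nhdsWithin).exists
  exact ⟨s, hs0, hs⟩

lemma abs_add_rpow_le {p : ℝ} (hp0 : 0 < p) (hp1 : p ≤ 1) (a b : ℝ) :
    |a + b| ^ p ≤ |a| ^ p + |b| ^ p :=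
  (Real.rpow_le_rpow (abs_nonneg _) (abs_add_le a b) hp0.le).trans
    (Real.rpow_add_le_add_rpow (abs_nonneg _) (abs_nonneg _) hp0.le hp1)

-- Pair each `T ∌ m` with `insert m T`: the two subset sums differ by `a m`.
lemma two_pow_card_mul_abs_rpow_le_sum_powerset {ι : Type*} {p : ℝ} (hp0 : 0 < p)
    (hp1 : p ≤ 1) (a : ι → ℝ) {D : Finset ι} {m : ι} (hm : m ∈ D) :
    2 ^ #D * |a m| ^ p ≤ 2 * ∑ T ∈ D.powerset, |∑ n ∈ T, a n| ^ p := by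
  classical
  obtain ⟨E, hmE, rfl⟩ : ∃ E, m ∉ E ∧ D = insert m E :=
    ⟨D.erase m, notMem_erase m D, (insert_erase hm).symm⟩
  have hpair : ∀ T ∈ E.powerset,
      |a m| ^ p ≤ |∑ n ∈ T, a n| ^ p + |∑ n ∈ insert m T, a n| ^ p := by
    intro T hT
    have h := abs_add_rpow_le hp0 hp1 (-∑ n ∈ T, a n) (a m + ∑ n ∈ T, a n)
    rwa [abs_neg, neg_add_cancel_comm_assoc,
      ← sum_insert fun hmT => hmE (mem_powerset.1 hT hmT)] at h
  have hsum := card_nsmul_le_sum _ _ _ hpair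
  rw [card_powerset, nsmul_eq_mul, Nat.cast_pow, Nat.cast_ofNat, sum_add_distrib] at hsum
  rw [sum_powerset_insert hmE, card_insert_of_notMem hmE, pow_succ]
  linarith

section GreedySet

variable {a : ℕ → ℝ} {A : Finset ℕ}

lemma GreedySet.filter_le_abs (hA : GreedySet a A) (t : ℝ) :
    GreedySet a {n ∈ A | t ≤ |a n|} := by
  intro n hn k hk
  obtain ⟨hnA, htn⟩ := mem_filter.1 hn
  by_cases hkA : k ∈ A
  · exact (not_le.1 fun htk => hk (mem_filter.2 ⟨hkA, htk⟩)).le.trans htn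
  · exact hA n hnA k hkA

lemma greedySet_of_forall_mem_iff {t : ℝ} (hA : ∀ n, n ∈ A ↔ t ≤ |a n|) : GreedySet a A :=
  fun n hn k hk => (not_le.1 fun htk => hk ((hA k).2 htk)).le.trans ((hA n).1 hn)

end GreedySet

/-- A group seminorm is `p`-homogeneous if it behaves like the `p`-th power of a `p`-norm. Working
with `‖·‖ ^ p` instead of `‖·‖` makes the triangle inequality additive. -/
def IsPHomogeneous {V : Type*} [AddCommGroup V] [Module ℝ V] (p : ℝ) (N : AddGroupSeminorm V) :
    Prop :=
  ∀ (c : ℝ) (v : V), N (c • v) = |c| ^ p * N v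

/-- The family `e` with coordinate functionals `φ` is a biorthogonal system whose greedy
projections are bounded by `Q`, where sizes are measured by `N`. When `N = ‖·‖ ^ p`, the constant
`Q` is the `p`-th power of the quasi-greedy constant. -/
structure IsQuasiGreedySystem {V : Type*} [AddCommGroup V] [Module ℝ V] (N : AddGroupSeminorm V)
    (e : ℕ → V) (φ : ℕ → Module.Dual ℝ V) (Q : ℝ) : Prop where
  biorth : ∀ m n, φ m (e n) = if m = n then 1 else 0
  nonneg : 0 ≤ Q
  greedy_le : ∀ f A, GreedySet (fun n => φ n f) A → N (∑ n ∈ A, φ n f • e n) ≤ Q * N f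

/-- Truncation quasi-greediness with constant `K`: on a greedy set, the coefficients of `f` may be
replaced by `t` times arbitrary multipliers from the unit ball, `t` being a lower bound for them.
Only the signs of the coefficients are customary as multipliers; arbitrary ones are more convenient
to apply. -/
def IsTruncationQuasiGreedy {V : Type*} [AddCommGroup V] [Module ℝ V] (p : ℝ)
    (N : AddGroupSeminorm V) (e : ℕ → V) (φ : ℕ → Module.Dual ℝ V) (K : ℝ) : Prop :=
  ∀ (f : V) (D : Finset ℕ) (t : ℝ) (b : ℕ → ℝ), 0 < t → GreedySet (fun n => φ n f) D →
    (∀ n ∈ D, t ≤ |φ n f|) → (∀ n ∈ D, |b n| ≤ 1) → t ^ p * N (∑ n ∈ D, b n • e n) ≤ K * N f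

section PHomogeneous

variable {V : Type*} [AddCommGroup V] [Module ℝ V] {p : ℝ} {N : AddGroupSeminorm V}

lemma IsPHomogeneous.sum_smul_le {ι : Type*} (hN : IsPHomogeneous p N) (hp : 0 < p) (v : ι → V)
    {D : Finset ι} {a : ι → ℝ} {t : ℝ} (ha : ∀ n ∈ D, |a n| ≤ t) :
    N (∑ n ∈ D, a n • v n) ≤ t ^ p * ∑ n ∈ D, N (v n) := by
  calc N (∑ n ∈ D, a n • v n) ≤ ∑ n ∈ D, N (a n • v n) :=
        le_sum_of_subadditive N (map_zero N).le (map_add_le_add N) D _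
    _ ≤ ∑ n ∈ D, t ^ p * N (v n) := by
        refine sum_le_sum fun n hn => ?_
        rw [hN]
        exact mul_le_mul_of_nonneg_right (Real.rpow_le_rpow (abs_nonneg _) (ha n hn) hp.le)
          (apply_nonneg N _)
    _ = t ^ p * ∑ n ∈ D, N (v n) := (mul_sum _ _ _).symm

-- The supremum `S` of the left-hand sides is finite, and writing `b = (ε + (2b - ε)) / 2` with
-- signs `ε` gives `S ≤ (R + S) / 2 ^ p`. This replaces convexity, which is unavailable for `p < 1`.
lemma IsPHomogeneous.sum_smul_le_of_forall_signs {ι : Type*} (hN : IsPHomogeneous p N) (hp : 0 < p)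
    (v : ι → V) (D : Finset ι) {R : ℝ}
    (hR : ∀ ε : ι → ℝ, (∀ n ∈ D, |ε n| = 1) → N (∑ n ∈ D, ε n • v n) ≤ R)
    {b : ι → ℝ} (hb : ∀ n ∈ D, |b n| ≤ 1) :
    N (∑ n ∈ D, b n • v n) ≤ R / (2 ^ p - 1) := by
  set U : Set ℝ :=
    Set.image (fun b : ι → ℝ => N (∑ n ∈ D, b n • v n)) {b | ∀ n ∈ D, |b n| ≤ 1}
  have hU : BddAbove U := by
    refine ⟨1 ^ p * ∑ n ∈ D, N (v n), ?_⟩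
    rintro _ ⟨b, hb, rfl⟩
    exact hN.sum_smul_le hp v hb
  have hstep : sSup U ≤ (R + sSup U) / 2 ^ p := by
    refine csSup_le (Set.Nonempty.image _ ⟨b, hb⟩) ?_
    rintro _ ⟨b, hb, rfl⟩
    choose ε hε hεb using fun n => exists_abs_eq_one_and_abs_mul_eq (b n)
    have hdouble : (2 : ℝ) • ∑ n ∈ D, b n • v n
        = ∑ n ∈ D, ε n • v n + ∑ n ∈ D, (2 * b n - ε n) • v n := by
      simp only [smul_sum, ← sum_add_distrib, ← add_smul, smul_smul, add_sub_cancel]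
    have hball : ∀ n ∈ D, |2 * b n - ε n| ≤ 1 := by
      intro n hn
      have hfactor : 2 * b n - ε n = (2 * |b n| - 1) * ε n := by linear_combination -2 * hεb n
      rw [hfactor, abs_mul, hε, mul_one, abs_le]
      constructor <;> linarith [hb n hn, abs_nonneg (b n)]
    rw [le_div_iff₀' (by positivity), ← abs_of_pos (two_pos (α := ℝ)), ← hN, hdouble]
    exact (map_add_le_add N _ _).trans
      (add_le_add (hR ε fun n _ => hε n) (le_csSup hU ⟨_, hball, rfl⟩))
  have h2 : (1 : ℝ) < 2 ^ p := Real.one_lt_rpow one_lt_two hp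
  rw [le_div_iff₀ (by positivity)] at hstep
  refine (le_csSup hU ⟨b, hb, rfl⟩).trans ?_
  rw [le_div_iff₀ (sub_pos.2 h2)]
  linarith

end PHomogeneous

namespace IsQuasiGreedySystem

variable {V : Type*} [AddCommGroup V] [Module ℝ V] {p : ℝ} {N : AddGroupSeminorm V}
  {e : ℕ → V} {φ : ℕ → Module.Dual ℝ V} {Q : ℝ}

lemma coord_sum (hs : IsQuasiGreedySystem N e φ Q) (m : ℕ) (D : Finset ℕ) (b : ℕ → ℝ) :
    φ m (∑ n ∈ D, b n • e n) = if m ∈ D then b m else 0 := by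
  simp [hs.biorth]

lemma coord_sub_sum (hs : IsQuasiGreedySystem N e φ Q) (m : ℕ) (f : V) (B : Finset ℕ) :
    φ m (f - ∑ n ∈ B, φ n f • e n) = if m ∈ B then 0 else φ m f := by
  rw [map_sub, hs.coord_sum]
  split_ifs <;> simp

lemma sum_signs_le_of_subset (hs : IsQuasiGreedySystem N e φ Q) {T D : Finset ℕ} (hT : T ⊆ D)
    {ε : ℕ → ℝ} (hε : ∀ n ∈ D, |ε n| = 1) :
    N (∑ n ∈ T, ε n • e n) ≤ Q * N (∑ n ∈ D, ε n • e n) := by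
  have hgreedy : GreedySet (fun n => φ n (∑ n ∈ D, ε n • e n)) T := by
    intro n hn k _
    simp only [hs.coord_sum, if_pos (hT hn), hε n (hT hn)]
    split_ifs with hk
    · exact (hε k hk).le
    · simp
  convert hs.greedy_le _ T hgreedy using 4 with n hn
  rw [hs.coord_sum, if_pos (hT hn)]

lemma sum_signs_le (hs : IsQuasiGreedySystem N e φ Q) {D : Finset ℕ} {ε θ : ℕ → ℝ}
    (hε : ∀ n ∈ D, |ε n| = 1) (hθ : ∀ n ∈ D, |θ n| = 1) :
    N (∑ n ∈ D, θ n • e n) ≤ 2 * Q * N (∑ n ∈ D, ε n • e n) := by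
  have hagree : ∑ n ∈ D with θ n = ε n, θ n • e n = ∑ n ∈ D with θ n = ε n, ε n • e n :=
    sum_congr rfl fun n hn => by rw [(mem_filter.1 hn).2]
  have hdisagree : ∑ n ∈ D with θ n ≠ ε n, θ n • e n = -∑ n ∈ D with θ n ≠ ε n, ε n • e n := by
    rw [← sum_neg_distrib]
    refine sum_congr rfl fun n hn => ?_
    obtain ⟨hnD, hne⟩ := mem_filter.1 hn
    rw [(abs_eq_abs.1 ((hθ n hnD).trans (hε n hnD).symm)).resolve_left hne, neg_smul]
  rw [← sum_filter_add_sum_filter_not D (fun n => θ n = ε n), hagree, hdisagree, ← sub_eq_add_neg]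
  calc _ ≤ N (∑ n ∈ D with θ n = ε n, ε n • e n) + N (∑ n ∈ D with θ n ≠ ε n, ε n • e n) :=
        map_sub_le_add N _ _
    _ ≤ Q * N (∑ n ∈ D, ε n • e n) + Q * N (∑ n ∈ D, ε n • e n) :=
        add_le_add (hs.sum_signs_le_of_subset (filter_subset _ _) hε)
          (hs.sum_signs_le_of_subset (filter_subset _ _) hε)
    _ = 2 * Q * N (∑ n ∈ D, ε n • e n) := by ring

lemma sum_smul_le_sum_signs (hs : IsQuasiGreedySystem N e φ Q) (hN : IsPHomogeneous p N)
    (hp : 0 < p) {D : Finset ℕ} {ε b : ℕ → ℝ} (hε : ∀ n ∈ D, |ε n| = 1)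
    (hb : ∀ n ∈ D, |b n| ≤ 1) :
    N (∑ n ∈ D, b n • e n) ≤ 2 * Q / (2 ^ p - 1) * N (∑ n ∈ D, ε n • e n) := by
  rw [div_mul_eq_mul_div]
  exact hN.sum_smul_le_of_forall_signs hp e D (fun θ hθ => hs.sum_signs_le hε hθ) hb

-- With `ε` the signs of `a`, the vector `∑ a n • e n` is `l • ∑ ε n • e n` up to an error
-- `(s * l) • ∑ w n • e n` with `|w n| ≤ 1`, which is absorbed because `s` is small.
lemma rpow_mul_sum_signs_le_of_nearly_constant (hs : IsQuasiGreedySystem N e φ Q)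
    (hN : IsPHomogeneous p N) (hp : 0 < p) {s l : ℝ} (hs0 : 0 < s) (hl : 0 < l)
    (hsmall : 2 * Q / (2 ^ p - 1) * s ^ p ≤ 1 / 2) {D : Finset ℕ} {a ε : ℕ → ℝ}
    (ha : ∀ n ∈ D, l ≤ |a n| ∧ |a n| ≤ (1 + s) * l) (hε : ∀ n ∈ D, |ε n| = 1)
    (hεa : ∀ n ∈ D, |a n| * ε n = a n) :
    l ^ p * N (∑ n ∈ D, ε n • e n) ≤ 2 * N (∑ n ∈ D, a n • e n) := by
  have hsl : 0 < s * l := mul_pos hs0 hl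
  set w : ℕ → ℝ := fun n => (l * ε n - a n) / (s * l)
  have hw : ∀ n ∈ D, |w n| ≤ 1 := by
    intro n hn
    have hfactor : l * ε n - a n = (l - |a n|) * ε n := by linear_combination hεa n hn
    rw [abs_div, abs_of_pos hsl, div_le_one hsl, hfactor, abs_mul, hε n hn, mul_one, abs_le]
    constructor <;> linarith [ha n hn]
  have hdecomp : l • ∑ n ∈ D, ε n • e n
      = ∑ n ∈ D, a n • e n + (s * l) • ∑ n ∈ D, w n • e n := by
    simp only [smul_sum, ← sum_add_distrib, ← add_smul, smul_smul, w,
      mul_div_cancel₀ _ hsl.ne', add_sub_cancel]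
  have hw_le := hs.sum_smul_le_sum_signs hN hp hε hw
  set E := N (∑ n ∈ D, ε n • e n)
  have hE : 0 ≤ l ^ p * E := mul_nonneg (Real.rpow_nonneg hl.le _) (apply_nonneg N _)
  have habsorb : l ^ p * E ≤ N (∑ n ∈ D, a n • e n) + 1 / 2 * (l ^ p * E) := by
    calc l ^ p * E = N (l • ∑ n ∈ D, ε n • e n) := by rw [hN, abs_of_pos hl]
      _ ≤ N (∑ n ∈ D, a n • e n) + (s * l) ^ p * N (∑ n ∈ D, w n • e n) := by
          rw [hdecomp, ← abs_of_pos hsl, ← hN, abs_of_pos hsl]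
          exact map_add_le_add N _ _
      _ ≤ N (∑ n ∈ D, a n • e n) + (s * l) ^ p * (2 * Q / (2 ^ p - 1) * E) := by gcongr
      _ = N (∑ n ∈ D, a n • e n) + 2 * Q / (2 ^ p - 1) * s ^ p * (l ^ p * E) := by
          rw [Real.mul_rpow hs0.le hl.le]; ring
      _ ≤ N (∑ n ∈ D, a n • e n) + 1 / 2 * (l ^ p * E) := by
          linarith [mul_le_mul_of_nonneg_right hsmall hE]
  linarith

lemma sum_sdiff_le (hs : IsQuasiGreedySystem N e φ Q) {f : V} {A D : Finset ℕ}
    (hA : GreedySet (fun n => φ n f) A) (hD : GreedySet (fun n => φ n f) D) (hAD : A ⊆ D) :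
    N (∑ n ∈ D \ A, φ n f • e n) ≤ 2 * Q * N f := by
  rw [sum_sdiff_eq_sub hAD]
  linarith [map_sub_le_add N (∑ n ∈ D, φ n f • e n) (∑ n ∈ A, φ n f • e n),
    hs.greedy_le f A hA, hs.greedy_le f D hD]

lemma exists_lowest_level_le (hs : IsQuasiGreedySystem N e φ Q) (hN : IsPHomogeneous p N)
    (hp : 0 < p) :
    ∃ s > 0, ∃ L ≥ 0, ∀ (f : V) (D : Finset ℕ) (l : ℝ) (b : ℕ → ℝ), 0 < l →
      GreedySet (fun n => φ n f) D → (∀ n ∈ D, l ≤ |φ n f|) → (∀ n ∈ D, |b n| ≤ 1) →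
      l ^ p * N (∑ n ∈ D with ¬(1 + s) * l ≤ |φ n f|, b n • e n) ≤ L * N f := by
  have hQ := hs.nonneg
  have h2 : 0 < (2 : ℝ) ^ p - 1 := sub_pos.2 (Real.one_lt_rpow one_lt_two hp)
  set K := 2 * Q / (2 ^ p - 1)
  have hK : 0 ≤ K := by positivity
  obtain ⟨s, hs0, hsK⟩ := exists_pos_mul_rpow_lt K hp one_half_pos
  refine ⟨s, hs0, K * (2 * (2 * Q)), by positivity, fun f D l b hl hD hlD hb => ?_⟩
  set A : Finset ℕ := {n ∈ D | ¬(1 + s) * l ≤ |φ n f|}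
  have hA : A ⊆ D := filter_subset _ _
  choose ε hε hεa using fun n => exists_abs_eq_one_and_abs_mul_eq (φ n f)
  have hconst : ∀ n ∈ A, l ≤ |φ n f| ∧ |φ n f| ≤ (1 + s) * l := fun n hn =>
    ⟨hlD n (hA hn), (not_le.1 (mem_filter.1 hn).2).le⟩
  have hproj : N (∑ n ∈ A, φ n f • e n) ≤ 2 * Q * N f := by
    rw [show A = D \ {n ∈ D | (1 + s) * l ≤ |φ n f|} from filter_not _ _]
    exact hs.sum_sdiff_le (hD.filter_le_abs _) hD (filter_subset _ _)
  calc l ^ p * N (∑ n ∈ A, b n • e n) ≤ l ^ p * (K * N (∑ n ∈ A, ε n • e n)) := by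
        gcongr
        exact hs.sum_smul_le_sum_signs hN hp (fun n _ => hε n) fun n hn => hb n (hA hn)
    _ = K * (l ^ p * N (∑ n ∈ A, ε n • e n)) := by ring
    _ ≤ K * (2 * N (∑ n ∈ A, φ n f • e n)) :=
        mul_le_mul_of_nonneg_left (hs.rpow_mul_sum_signs_le_of_nearly_constant hN hp hs0 hl
          hsK.le hconst (fun n _ => hε n) fun n _ => hεa n) hK
    _ ≤ K * (2 * (2 * Q * N f)) := by gcongr
    _ = K * (2 * (2 * Q)) * N f := by ring

-- Peel off the indices where `|φ n f|` lies within a factor `1 + s` of its minimum `t` on `D`. Each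
-- peeling multiplies `t` by at least `1 + s`, so the contributions form a geometric series.
lemma exists_isTruncationQuasiGreedy (hs : IsQuasiGreedySystem N e φ Q) (hN : IsPHomogeneous p N)
    (hp : 0 < p) : ∃ K ≥ 0, IsTruncationQuasiGreedy p N e φ K := by
  obtain ⟨s, hs0, L, hL, hlevel⟩ := hs.exists_lowest_level_le hN hp
  set σ : ℝ := (1 + s) ^ p
  have hσ : 1 < σ := Real.one_lt_rpow (by linarith) hp
  have hσ' : 0 < 1 - σ⁻¹ := sub_pos.2 (inv_lt_one_of_one_lt₀ hσ)
  set K : ℝ := L / (1 - σ⁻¹)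
  have hK : K * (1 - σ⁻¹) = L := div_mul_cancel₀ _ hσ'.ne'
  have hK0 : 0 ≤ K := by positivity
  refine ⟨K, hK0, fun f D t b ht hD htD hb => ?_⟩
  have hNf : 0 ≤ N f := apply_nonneg N f
  induction D using Finset.strongInduction generalizing t with
  | H D ih =>
  rcases D.eq_empty_or_nonempty with rfl | hne
  · simpa using mul_nonneg hK0 hNf
  obtain ⟨m, hmD, hmin⟩ := exists_min_image D (fun n => |φ n f|) hne
  set l := |φ m f|
  have hl : 0 < l := ht.trans_le (htD m hmD)
  set A : Finset ℕ := {n ∈ D | (1 + s) * l ≤ |φ n f|}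
  have hAD : A ⊆ D := filter_subset _ _
  have hmA : m ∉ A := fun hm => by nlinarith [(mem_filter.1 hm).2]
  have hA : GreedySet (fun n => φ n f) A := hD.filter_le_abs _
  have htop : σ * (l ^ p * N (∑ n ∈ A, b n • e n)) ≤ K * N f := by
    rw [← mul_assoc, ← Real.mul_rpow (by positivity) hl.le]
    exact ih A (hAD.ssubset_of_mem_notMem hmD hmA) _ (by positivity) hA
      (fun n hn => (mem_filter.1 hn).2) fun n hn => hb n (hAD hn)
  calc t ^ p * N (∑ n ∈ D, b n • e n) ≤ l ^ p * N (∑ n ∈ D, b n • e n) := by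
        gcongr; exact htD m hmD
    _ ≤ l ^ p * (N (∑ n ∈ A, b n • e n)
          + N (∑ n ∈ D with ¬(1 + s) * l ≤ |φ n f|, b n • e n)) := by
        rw [← sum_filter_add_sum_filter_not D (fun n => (1 + s) * l ≤ |φ n f|)]
        gcongr
        exact map_add_le_add N _ _
    _ ≤ σ⁻¹ * (K * N f) + L * N f := by
        rw [mul_add]
        refine add_le_add ?_ (hlevel f D l b hl hD hmin hb)
        rwa [← div_eq_inv_mul, le_div_iff₀' (by positivity)]
    _ = K * N f := by rw [← hK]; ring

lemma finite_setOf_le_abs_coord (hs : IsQuasiGreedySystem N e φ Q) (hp : 0 < p) {B : ℝ}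
    (hφ : ∀ n f, |φ n f| ^ p ≤ B * N f)
    (hdense : ∀ f, ∀ δ > 0, ∃ (D : Finset ℕ) (c : ℕ → ℝ), N (f - ∑ n ∈ D, c n • e n) < δ)
    {η : ℝ} (hη : 0 < η) (f : V) : {n | η ≤ |φ n f|}.Finite := by
  obtain ⟨δ, hδ, hBδ⟩ := exists_pos_mul_rpow_lt B one_pos (Real.rpow_pos_of_pos hη p)
  rw [Real.rpow_one] at hBδ
  obtain ⟨D, c, hD⟩ := hdense f δ hδ
  have hBf : B * N (f - ∑ n ∈ D, c n • e n) < η ^ p := by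
    rcases le_total 0 B with hB | hB
    · exact (mul_le_mul_of_nonneg_left hD.le hB).trans_lt hBδ
    · exact (mul_nonpos_of_nonpos_of_nonneg hB (apply_nonneg N _)).trans_lt
        (Real.rpow_pos_of_pos hη p)
  refine D.finite_toSet.subset fun n hn => by_contra fun hnD => ?_
  refine ((hφ n (f - ∑ n ∈ D, c n • e n)).trans_lt hBf).not_ge ?_
  rw [map_sub, hs.coord_sum, if_neg (mt mem_coe.2 hnD), sub_zero]
  exact Real.rpow_le_rpow hη.le hn hp.le

lemma greedySet_coord_residual (hs : IsQuasiGreedySystem N e φ Q) {f : V} {A : Finset ℕ}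
    (hA : GreedySet (fun n => φ n f) A) (B : Finset ℕ) :
    GreedySet (fun n => φ n (f - ∑ k ∈ B, φ k f • e k)) (A \ B) := by
  intro n hn k hk
  obtain ⟨hnA, hnB⟩ := mem_sdiff.1 hn
  simp only [hs.coord_sub_sum, if_neg hnB]
  split_ifs with hkB
  · simp
  · exact hA n hnA k fun hkA => hk (mem_sdiff.2 ⟨hkA, hkB⟩)

end IsQuasiGreedySystem

namespace IsTruncationQuasiGreedy

variable {V : Type*} [AddCommGroup V] [Module ℝ V] {p : ℝ} {N : AddGroupSeminorm V}
  {e : ℕ → V} {φ : ℕ → Module.Dual ℝ V} {K : ℝ}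

-- Evaluate `ψ` at `∑ b n • e n`, where `b` matches the signs of `ψ (e n)` on `H` and vanishes on
-- the rest of the greedy set `{n | η ≤ |φ n f|}`.
lemma card_mul_rpow_le (hK : IsTruncationQuasiGreedy p N e φ K) (hp : 0 < p) {f : V} {η δ : ℝ}
    (hη : 0 < η) (hδ : 0 ≤ δ) (hfin : {n | η ≤ |φ n f|}.Finite) (ψ : Module.Dual ℝ V)
    (hψ : ∀ v, |ψ v| ^ p ≤ N v) {H : Finset ℕ} (hHφ : ∀ n ∈ H, η ≤ |φ n f|)
    (hHψ : ∀ n ∈ H, δ ≤ |ψ (e n)|) : (#H * δ * η) ^ p ≤ K * N f := by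
  choose ε hε hεψ using fun n => exists_abs_eq_one_and_abs_mul_eq (ψ (e n))
  have hG : ∀ n, n ∈ hfin.toFinset ↔ η ≤ |φ n f| := fun n => hfin.mem_toFinset
  set b : ℕ → ℝ := fun n => if n ∈ H then ε n else 0
  have hb : ∀ n, |b n| ≤ 1 := by
    intro n
    simp only [b]
    split_ifs <;> simp [hε]
  have hsum : ∑ n ∈ hfin.toFinset, b n • e n = ∑ n ∈ H, ε n • e n := by
    simp only [b, ite_smul, zero_smul, sum_ite_mem]
    rw [inter_eq_right.2 fun n hn => (hG n).2 (hHφ n hn)]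
  have hψsum : #H * δ ≤ |ψ (∑ n ∈ H, ε n • e n)| := by
    calc #H * δ ≤ ∑ n ∈ H, |ψ (e n)| := by simpa using card_nsmul_le_sum H _ δ hHψ
      _ = ψ (∑ n ∈ H, ε n • e n) := by
          rw [map_sum]
          refine sum_congr rfl fun n _ => ?_
          have hsq : ε n * ε n = 1 := by rw [← abs_mul_abs_self, hε, one_mul]
          rw [map_smul, smul_eq_mul, ← hεψ n, abs_mul, abs_abs, hε]
          linear_combination -|ψ (e n)| * hsq
      _ ≤ _ := le_abs_self _
  calc (#H * δ * η) ^ p = η ^ p * (#H * δ) ^ p := by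
        rw [mul_comm, Real.mul_rpow hη.le (by positivity)]
    _ ≤ η ^ p * N (∑ n ∈ hfin.toFinset, b n • e n) := by
        rw [hsum]
        gcongr
        exact (Real.rpow_le_rpow (by positivity) hψsum hp.le).trans (hψ _)
    _ ≤ K * N f := hK f _ η b hη (greedySet_of_forall_mem_iff hG) (fun n hn => (hG n).1 hn)
        fun n _ => hb n

section Democracy

variable {Δ X : ℝ}

lemma rpow_mul_card_le (hK : IsTruncationQuasiGreedy p N e φ K) (hΔ0 : 0 ≤ Δ)
    (hΔ : ∀ D : Finset ℕ, #D ≤ Δ * N (∑ n ∈ D, e n)) {g : V} {D : Finset ℕ} {t : ℝ} (ht : 0 < t)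
    (hD : GreedySet (fun n => φ n g) D) (htD : ∀ n ∈ D, t ≤ |φ n g|) :
    t ^ p * #D ≤ Δ * (K * N g) := by
  have hone := hK g D t 1 ht hD htD fun n _ => abs_one.le
  simp only [Pi.one_apply, one_smul] at hone
  calc t ^ p * #D ≤ t ^ p * (Δ * N (∑ n ∈ D, e n)) := by gcongr; exact hΔ D
    _ = Δ * (t ^ p * N (∑ n ∈ D, e n)) := by ring
    _ ≤ Δ * (K * N g) := by gcongr

lemma sum_smul_le_of_card_le (hK : IsTruncationQuasiGreedy p N e φ K) (hK0 : 0 ≤ K)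
    (hN : IsPHomogeneous p N) (hp : 0 < p) (hΔ0 : 0 ≤ Δ)
    (hΔ : ∀ D : Finset ℕ, #D ≤ Δ * N (∑ n ∈ D, e n)) (hX : ∀ n, N (e n) ≤ X) {g : V}
    {D E : Finset ℕ} (hD : GreedySet (fun n => φ n g) D) (hcard : #E ≤ #D) {a : ℕ → ℝ}
    (ha : ∀ k ∈ E, ∀ n ∈ D, |a k| ≤ |φ n g|) :
    N (∑ k ∈ E, a k • e k) ≤ X * Δ * K * N g := by
  have hX0 : 0 ≤ X := (apply_nonneg N _).trans (hX 0)
  have hrhs : 0 ≤ X * Δ * K * N g := mul_nonneg (by positivity) (apply_nonneg N g)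
  rcases E.eq_empty_or_nonempty with rfl | hne
  · simpa using hrhs
  obtain ⟨m, hmE, hmax⟩ := exists_max_image E (fun k => |a k|) hne
  have hsum : N (∑ k ∈ E, a k • e k) ≤ |a m| ^ p * (#E * X) := by
    refine (hN.sum_smul_le hp e hmax).trans ?_
    gcongr
    simpa using sum_le_card_nsmul E (fun k => N (e k)) X fun k _ => hX k
  rcases (abs_nonneg (a m)).eq_or_lt with hzero | hpos
  · rw [← hzero, Real.zero_rpow hp.ne', zero_mul] at hsum
    exact hsum.trans hrhs
  calc N (∑ k ∈ E, a k • e k) ≤ |a m| ^ p * (#D * X) := hsum.trans (by gcongr)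
    _ = X * (|a m| ^ p * #D) := by ring
    _ ≤ X * (Δ * (K * N g)) :=
        mul_le_mul_of_nonneg_left (hK.rpow_mul_card_le hΔ0 hΔ hpos hD (ha m hmE)) hX0
    _ = X * Δ * K * N g := by ring

-- `f - S_A f = g - S_{A \ B} g + S_{B \ A} f` for `g = f - S_B f`: the first projection is greedy
-- for `g`, and the coefficients of the second are dominated by those of `g` on `A \ B`.
lemma almost_greedy (hK : IsTruncationQuasiGreedy p N e φ K) (hK0 : 0 ≤ K) {Q : ℝ}
    (hs : IsQuasiGreedySystem N e φ Q) (hN : IsPHomogeneous p N) (hp : 0 < p) (hΔ0 : 0 ≤ Δ)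
    (hΔ : ∀ D : Finset ℕ, #D ≤ Δ * N (∑ n ∈ D, e n)) (hX : ∀ n, N (e n) ≤ X) {f : V}
    {A B : Finset ℕ} (hA : GreedySet (fun n => φ n f) A) (hcard : #B ≤ #A) :
    N (f - ∑ n ∈ A, φ n f • e n) ≤ (1 + Q + X * Δ * K) * N (f - ∑ n ∈ B, φ n f • e n) := by
  set g := f - ∑ n ∈ B, φ n f • e n with hg
  have hgreedy : GreedySet (fun n => φ n g) (A \ B) := hs.greedySet_coord_residual hA B
  have hcoord : ∀ n ∈ A \ B, φ n g = φ n f := fun n hn => by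
    rw [hg, hs.coord_sub_sum, if_neg (mem_sdiff.1 hn).2]
  have hdecomp : f - ∑ n ∈ A, φ n f • e n
      = g - ∑ n ∈ A \ B, φ n g • e n + ∑ n ∈ B \ A, φ n f • e n := by
    have hAB := sum_sdiff_sub_sum_sdiff (s₂ := A) (s₁ := B) (f := fun n => φ n f • e n)
    have hsum : ∑ n ∈ A \ B, φ n g • e n = ∑ n ∈ A \ B, φ n f • e n :=
      sum_congr rfl fun n hn => by rw [hcoord n hn]
    rw [hsum, sub_add, hAB, hg]
    abel
  have hswap : N (∑ n ∈ B \ A, φ n f • e n) ≤ X * Δ * K * N g := by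
    refine hK.sum_smul_le_of_card_le hK0 hN hp hΔ0 hΔ hX hgreedy
      (card_sdiff_le_card_sdiff_iff.2 hcard) fun k hk n hn => ?_
    rw [hcoord n hn]
    exact hA n (mem_sdiff.1 hn).1 k (mem_sdiff.1 hk).2
  calc N (f - ∑ n ∈ A, φ n f • e n)
      ≤ N g + N (∑ n ∈ A \ B, φ n g • e n) + N (∑ n ∈ B \ A, φ n f • e n) := by
        rw [hdecomp]
        exact (map_add_le_add N _ _).trans (add_le_add_left (map_sub_le_add N _ _) _)
    _ ≤ N g + Q * N g + X * Δ * K * N g := by gcongr; exact hs.greedy_le g _ hgreedy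
    _ = (1 + Q + X * Δ * K) * N g := by ring

end Democracy

end IsTruncationQuasiGreedy

section LpSpace

open scoped ENNReal lp

variable {α : Type*} {p : ℝ≥0∞}

/-- The `p`-th power of the quasi-norm of `ℓ_p`, `0 < p ≤ 1`, which satisfies the triangle
inequality. -/
noncomputable def lpPowSeminorm (hp0 : 0 < p.toReal) (hp1 : p.toReal ≤ 1) :
    AddGroupSeminorm ℓ^p(α, ℝ) where
  toFun f := ‖f‖ ^ p.toReal
  map_zero' := by rw [lp.norm_zero, Real.zero_rpow hp0.ne']
  neg' f := by rw [lp.norm_neg]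
  add_le' f g := by
    have hf := lp.hasSum_norm hp0 f
    have hg := lp.hasSum_norm hp0 g
    exact hasSum_le (fun i => abs_add_rpow_le hp0 hp1 (f i) (g i)) (lp.hasSum_norm hp0 (f + g))
      (hf.add hg)

lemma lpPowSeminorm_apply (hp0 : 0 < p.toReal) (hp1 : p.toReal ≤ 1) (f : ℓ^p(α, ℝ)) :
    lpPowSeminorm hp0 hp1 f = ‖f‖ ^ p.toReal := rfl

lemma isPHomogeneous_lpPowSeminorm (hp0 : 0 < p.toReal) (hp1 : p.toReal ≤ 1) :
    IsPHomogeneous p.toReal (lpPowSeminorm (α := α) hp0 hp1) := by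
  intro c f
  rw [lpPowSeminorm_apply, lpPowSeminorm_apply,
    lp.norm_const_smul (ENNReal.toReal_pos_iff.1 hp0).1.ne', Real.norm_eq_abs,
    Real.mul_rpow (abs_nonneg c) (lp.norm_nonneg' f)]

lemma norm_le_of_lpPowSeminorm_le (hp0 : 0 < p.toReal) (hp1 : p.toReal ≤ 1)
    {f g : ℓ^p(α, ℝ)} {C : ℝ} (hC : 0 ≤ C)
    (h : lpPowSeminorm hp0 hp1 f ≤ C * lpPowSeminorm hp0 hp1 g) :
    ‖f‖ ≤ C ^ p.toReal⁻¹ * ‖g‖ := by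
  have hg := lp.norm_nonneg' g
  rw [← Real.rpow_le_rpow_iff (lp.norm_nonneg' f) (by positivity) hp0,
    Real.mul_rpow (by positivity) hg, Real.rpow_inv_rpow hC hp0.ne']
  exact h

-- Average over all `T ⊆ D`: every coordinate of `J` receives at least `δ ^ p / 2` on average.
lemma card_mul_rpow_le_of_forall_subset (hp0 : 0 < p.toReal) (hp1 : p.toReal ≤ 1) {ι : Type*}
    (v : ι → ℓ^p(α, ℝ)) {D : Finset ι} {J : Finset α} {δ R : ℝ} (hδ : 0 ≤ δ)
    (hJ : ∀ j ∈ J, ∃ n ∈ D, δ ≤ |v n j|)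
    (hR : ∀ T ⊆ D, lpPowSeminorm hp0 hp1 (∑ n ∈ T, v n) ≤ R) :
    #J * δ ^ p.toReal ≤ 2 * R := by
  have hcoord : ∀ j ∈ J,
      2 ^ #D * δ ^ p.toReal ≤ 2 * ∑ T ∈ D.powerset, |∑ n ∈ T, v n j| ^ p.toReal := by
    intro j hj
    obtain ⟨n, hnD, hn⟩ := hJ j hj
    refine le_trans ?_
      (two_pow_card_mul_abs_rpow_le_sum_powerset hp0 hp1 (fun n => v n j) hnD)
    gcongr
  have hrestrict : ∀ T ⊆ D, ∑ j ∈ J, |∑ n ∈ T, v n j| ^ p.toReal ≤ R := by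
    intro T hT
    refine le_trans (le_of_eq ?_) ((lp.sum_rpow_le_norm_rpow hp0 (∑ n ∈ T, v n) J).trans (hR T hT))
    simp only [lp.coeFn_sum, Finset.sum_apply, Real.norm_eq_abs]
  have hsum : #J * (2 ^ #D * δ ^ p.toReal) ≤ 2 * (2 ^ #D * R) := by
    calc #J * (2 ^ #D * δ ^ p.toReal)
        ≤ ∑ j ∈ J, 2 * ∑ T ∈ D.powerset, |∑ n ∈ T, v n j| ^ p.toReal := by
          simpa using card_nsmul_le_sum J _ _ hcoord
      _ = 2 * ∑ T ∈ D.powerset, ∑ j ∈ J, |∑ n ∈ T, v n j| ^ p.toReal := by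
          rw [← mul_sum, sum_comm]
      _ ≤ 2 * (2 ^ #D * R) := by
          gcongr
          simpa using sum_le_card_nsmul D.powerset _ R fun T hT => hrestrict T (mem_powerset.1 hT)
  have h2 : (0 : ℝ) < 2 ^ #D := by positivity
  exact le_of_mul_le_mul_left (by linarith) h2

section Single

variable [DecidableEq α] {ψ : Module.Dual ℝ ℓ^p(α, ℝ)} {B : ℝ}

lemma hasSum_mul_apply_single (hp0 : 0 < p.toReal) (hψ : ∀ v, |ψ v| ≤ B * ‖v‖)
    (f : ℓ^p(α, ℝ)) : HasSum (fun i => f i * ψ (lp.single p i 1)) (ψ f) := by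
  have hpow : Tendsto (fun s => ‖f - ∑ i ∈ s, lp.single p i (f i)‖ ^ p.toReal) atTop (𝓝 0) := by
    simpa only [lp.norm_compl_sum_single hp0, sub_self, SummationFilter.unconditional_filter]
      using (lp.hasSum_norm hp0 f).const_sub (‖f‖ ^ p.toReal)
  have hnorm : Tendsto (fun s => ‖f - ∑ i ∈ s, lp.single p i (f i)‖) atTop (𝓝 0) := by
    have := hpow.rpow_const (p := p.toReal⁻¹) (Or.inr (inv_nonneg.2 hp0.le))
    simpa only [Real.rpow_rpow_inv (lp.norm_nonneg' _) hp0.ne',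
      Real.zero_rpow (inv_ne_zero hp0.ne')] using this
  have hpartial : ∀ s : Finset α, ∑ i ∈ s, f i * ψ (lp.single p i 1)
      = ψ (∑ i ∈ s, lp.single p i (f i)) := by
    intro s
    rw [map_sum]
    refine sum_congr rfl fun i _ => ?_
    rw [← smul_eq_mul, ← map_smul, ← lp.single_smul, smul_eq_mul, mul_one]
  refine tendsto_iff_norm_sub_tendsto_zero.2 (squeeze_zero (fun _ => norm_nonneg _) (fun s => ?_)
    (by simpa using hnorm.const_mul B))
  rw [hpartial, norm_sub_rev, ← map_sub, Real.norm_eq_abs]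
  exact hψ _

-- In `|f i| = |f i| ^ p * |f i| ^ (1 - p)` the second factor is small for the coordinates below
-- `δ`, while the first one is summable.
lemma abs_apply_le_of_forall_coord (hp0 : 0 < p.toReal) (hp1 : p.toReal ≤ 1)
    (hψ : ∀ v, |ψ v| ≤ B * ‖v‖) {f : ℓ^p(α, ℝ)} {δ η : ℝ} (hδ : 0 ≤ δ) (hη : 0 ≤ η)
    (hcoord : ∀ i, δ ≤ |f i| → |ψ (lp.single p i 1)| ≤ η) :
    |ψ f| ≤ ‖f‖ ^ p.toReal * (B * δ ^ (1 - p.toReal) + η * ‖f‖ ^ (1 - p.toReal)) := by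
  have hp1' : 0 ≤ 1 - p.toReal := sub_nonneg.2 hp1
  have hppos : 0 < p := (ENNReal.toReal_pos_iff.1 hp0).1
  have hf := lp.norm_nonneg' f
  have hsingle : ∀ i, |ψ (lp.single p i 1)| ≤ B := fun i => by
    simpa [lp.norm_single hppos] using hψ (lp.single p i 1)
  have hterm : ∀ i, ‖f i * ψ (lp.single p i 1)‖
      ≤ ‖f i‖ ^ p.toReal * (B * δ ^ (1 - p.toReal) + η * ‖f‖ ^ (1 - p.toReal)) := by
    intro i
    have hB : 0 ≤ B := (abs_nonneg _).trans (hsingle i)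
    have hsplit : |f i| = |f i| ^ p.toReal * |f i| ^ (1 - p.toReal) := by
      rw [← Real.rpow_add_of_nonneg (abs_nonneg _) hp0.le hp1', add_sub_cancel, Real.rpow_one]
    rw [norm_mul, Real.norm_eq_abs, Real.norm_eq_abs, hsplit, mul_assoc, ← hsplit,
      mul_comm (_ ^ (1 - _))]
    refine mul_le_mul_of_nonneg_left ?_ (by positivity)
    rcases le_or_gt δ |f i| with hi | hi
    · refine le_add_of_nonneg_of_le (by positivity) ?_
      gcongr
      · exact hcoord i hi
      · exact lp.norm_apply_le_norm hppos.ne' f i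
    · refine le_add_of_le_of_nonneg ?_ (by positivity)
      gcongr
      exact hsingle i
  rw [← (hasSum_mul_apply_single hp0 hψ f).tsum_eq]
  exact tsum_of_norm_bounded ((lp.hasSum_norm hp0 f).mul_right _) hterm

lemma exists_coord_ge_of_apply_eq_one (hp0 : 0 < p.toReal) (hp1 : p.toReal < 1) (hB : 0 ≤ B)
    (X : ℝ) :
    ∃ δ > 0, ∃ η > 0, ∀ (f : ℓ^p(α, ℝ)) (ψ : Module.Dual ℝ ℓ^p(α, ℝ)),
      (∀ v, |ψ v| ≤ B * ‖v‖) → ‖f‖ ≤ X → ψ f = 1 →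
        ∃ i, δ ≤ |f i| ∧ η ≤ |ψ (lp.single p i 1)| := by
  obtain ⟨δ, hδ, hδ_small⟩ := exists_pos_mul_rpow_lt (X ^ p.toReal * B) (sub_pos.2 hp1) one_half_pos
  obtain ⟨η, hη, hη_small⟩ := exists_pos_mul_rpow_lt (X ^ p.toReal * X ^ (1 - p.toReal)) one_pos
    one_half_pos
  rw [Real.rpow_one] at hη_small
  refine ⟨δ, hδ, η, hη, fun f ψ hψ hfX hψf => ?_⟩
  by_contra! hsmall
  have hf := lp.norm_nonneg' f
  have hX := hf.trans hfX
  have hbound := abs_apply_le_of_forall_coord hp0 hp1.le hψ hδ.le hη.le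
    fun i hi => (hsmall i hi).le
  have hmono : ‖f‖ ^ p.toReal * (B * δ ^ (1 - p.toReal) + η * ‖f‖ ^ (1 - p.toReal))
      ≤ X ^ p.toReal * (B * δ ^ (1 - p.toReal) + η * X ^ (1 - p.toReal)) := by
    gcongr
  rw [hψf, abs_one] at hbound
  linarith

end Single

variable {e : ℕ → ℓ^p(α, ℝ)} {φ : ℕ → Module.Dual ℝ ℓ^p(α, ℝ)} {hp0 : 0 < p.toReal}

lemma IsTruncationQuasiGreedy.exists_card_le_of_coord_ge [DecidableEq α] {hp1 : p.toReal ≤ 1}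
    {K : ℝ} (hK : IsTruncationQuasiGreedy p.toReal (lpPowSeminorm hp0 hp1) e φ K) {δ η : ℝ}
    (hδ : 0 < δ) (hη : 0 < η) (hfin : ∀ f, {n | η ≤ |φ n f|}.Finite) :
    ∃ M : ℕ, ∀ (j : α) (H : Finset ℕ),
      (∀ n ∈ H, δ ≤ |e n j| ∧ η ≤ |φ n (lp.single p j 1)|) → #H ≤ M := by
  have hppos : 0 < p := (ENNReal.toReal_pos_iff.1 hp0).1
  obtain ⟨M, hM⟩ := exists_nat_ge (K ^ p.toReal⁻¹ / (δ * η))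
  refine ⟨M, fun j H hH => ?_⟩
  have heval : ∀ v : ℓ^p(α, ℝ), |lp.evalₗ (𝕜 := ℝ) (fun _ => ℝ) p j v| ^ p.toReal
      ≤ lpPowSeminorm hp0 hp1 v := fun v =>
    Real.rpow_le_rpow (abs_nonneg _) (lp.norm_apply_le_norm hppos.ne' v j) hp0.le
  have hpow : (#H * δ * η) ^ p.toReal ≤ K := by
    simpa [lpPowSeminorm_apply, lp.norm_single hppos] using
      hK.card_mul_rpow_le hp0 hη hδ.le (hfin (lp.single p j 1)) _ heval
        (fun n hn => (hH n hn).2) fun n hn => (hH n hn).1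
  have hcard : (#H : ℝ) ≤ K ^ p.toReal⁻¹ / (δ * η) := by
    rw [le_div_iff₀ (mul_pos hδ hη), ← mul_assoc]
    exact (Real.le_rpow_inv_iff_of_pos (by positivity)
      ((Real.rpow_nonneg (by positivity) _).trans hpow) hp0).2 hpow
  exact_mod_cast hcard.trans hM

namespace IsQuasiGreedySystem

variable {Q B X : ℝ}

lemma finite_setOf_le_abs_coord_lp {hp1 : p.toReal ≤ 1}
    (hs : IsQuasiGreedySystem (lpPowSeminorm hp0 hp1) e φ Q) (hB : 0 ≤ B)
    (hφ : ∀ n f, |φ n f| ≤ B * ‖f‖)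
    (hdense : ∀ f, ∀ ε > 0, ∃ (D : Finset ℕ) (c : ℕ → ℝ),
      lpPowSeminorm hp0 hp1 (f - ∑ n ∈ D, c n • e n) < ε) {η : ℝ} (hη : 0 < η) (f : ℓ^p(α, ℝ)) :
    {n | η ≤ |φ n f|}.Finite := by
  refine hs.finite_setOf_le_abs_coord hp0 (B := B ^ p.toReal) (fun n f => ?_) hdense hη f
  rw [lpPowSeminorm_apply, ← Real.mul_rpow hB (lp.norm_nonneg' f)]
  exact Real.rpow_le_rpow (abs_nonneg _) (hφ n f) hp0.le

lemma exists_card_le_mul_sum (hp1 : p.toReal < 1)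
    (hs : IsQuasiGreedySystem (lpPowSeminorm hp0 hp1.le) e φ Q) (hB : 0 ≤ B)
    (hφ : ∀ n f, |φ n f| ≤ B * ‖f‖) (he : ∀ n, ‖e n‖ ≤ X)
    (hdense : ∀ f, ∀ ε > 0, ∃ (D : Finset ℕ) (c : ℕ → ℝ),
      lpPowSeminorm hp0 hp1.le (f - ∑ n ∈ D, c n • e n) < ε) :
    ∃ Δ ≥ 0, ∀ D : Finset ℕ, #D ≤ Δ * lpPowSeminorm hp0 hp1.le (∑ n ∈ D, e n) := by
  classical
  obtain ⟨K, -, hK⟩ := hs.exists_isTruncationQuasiGreedy (isPHomogeneous_lpPowSeminorm _ _) hp0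
  obtain ⟨δ, hδ, η, hη, hlarge⟩ := exists_coord_ge_of_apply_eq_one (α := α) hp0 hp1 hB X
  choose J hJe hJφ using fun n => hlarge (e n) (φ n) (hφ n) (he n) (by simp [hs.biorth])
  obtain ⟨M, hM⟩ := hK.exists_card_le_of_coord_ge hδ hη
    (hs.finite_setOf_le_abs_coord_lp hB hφ hdense hη)
  have hfiber : ∀ (D : Finset ℕ) (j : α), #{n ∈ D | J n = j} ≤ M := fun D j =>
    hM j _ fun n hn => (mem_filter.1 hn).2 ▸ ⟨hJe n, hJφ n⟩
  have himage : ∀ D : Finset ℕ, #(D.image J) * δ ^ p.toReal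
      ≤ 2 * (Q * lpPowSeminorm hp0 hp1.le (∑ n ∈ D, e n)) := by
    intro D
    refine card_mul_rpow_le_of_forall_subset hp0 hp1.le e hδ.le (D := D) (fun j hj => ?_)
      fun T hT => ?_
    · obtain ⟨n, hnD, rfl⟩ := mem_image.1 hj
      exact ⟨n, hnD, hJe n⟩
    · simpa using hs.sum_signs_le_of_subset hT (ε := 1) (by simp)
  have hQ := hs.nonneg
  refine ⟨M * (2 * Q / δ ^ p.toReal), by positivity, fun D => ?_⟩
  calc (#D : ℝ) ≤ M * #(D.image J) := by
        exact_mod_cast card_le_mul_card_image D M fun j _ => hfiber D j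
    _ ≤ M * (2 * (Q * lpPowSeminorm hp0 hp1.le (∑ n ∈ D, e n)) / δ ^ p.toReal) := by
        gcongr
        exact (le_div_iff₀ (by positivity)).2 (himage D)
    _ = M * (2 * Q / δ ^ p.toReal) * lpPowSeminorm hp0 hp1.le (∑ n ∈ D, e n) := by ring

theorem exists_almost_greedy_lp (hp1 : p.toReal < 1)
    (hs : IsQuasiGreedySystem (lpPowSeminorm hp0 hp1.le) e φ Q) (hB : 0 ≤ B)
    (hφ : ∀ n f, |φ n f| ≤ B * ‖f‖) (he : ∀ n, ‖e n‖ ≤ X)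
    (hdense : ∀ f, ∀ ε > 0, ∃ (D : Finset ℕ) (c : ℕ → ℝ),
      lpPowSeminorm hp0 hp1.le (f - ∑ n ∈ D, c n • e n) < ε) :
    ∃ C, ∀ (f : ℓ^p(α, ℝ)) (A B : Finset ℕ), GreedySet (fun n => φ n f) A → #B ≤ #A →
      ‖f - ∑ n ∈ A, φ n f • e n‖ ≤ C * ‖f - ∑ n ∈ B, φ n f • e n‖ := by
  have hN := isPHomogeneous_lpPowSeminorm (α := α) hp0 hp1.le
  obtain ⟨K, hK0, hK⟩ := hs.exists_isTruncationQuasiGreedy hN hp0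
  obtain ⟨Δ, hΔ0, hΔ⟩ := hs.exists_card_le_mul_sum hp1 hB hφ he hdense
  have he_pow : ∀ n, lpPowSeminorm hp0 hp1.le (e n) ≤ X ^ p.toReal := fun n =>
    Real.rpow_le_rpow (lp.norm_nonneg' _) (he n) hp0.le
  have hX : 0 ≤ X ^ p.toReal := (apply_nonneg _ _).trans (he_pow 0)
  have hQ := hs.nonneg
  exact ⟨_, fun f A B hA hBA => norm_le_of_lpPowSeminorm_le hp0 hp1.le (by positivity)
    (hK.almost_greedy hK0 hs hN hp0 hΔ0 hΔ he_pow hA hBA)⟩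

end IsQuasiGreedySystem

end LpSpace

section Bridge

open scoped ENNReal lp

variable {p : ℝ≥0∞}

lemma memℓp_iff_memLpSeq (hp0 : 0 < p.toReal) {f : ℕ → ℝ} :
    Memℓp f p ↔ MemLpSeq p.toReal f :=
  memℓp_gen_iff hp0

lemma lp_norm_eq_pNorm (hp0 : 0 < p.toReal) (f : ℓ^p(ℕ, ℝ)) : ‖f‖ = pNorm p.toReal f :=
  lp.norm_eq_tsum_rpow hp0 f

namespace IsLpBasis

variable {x : ℕ → ℕ → ℝ} {xs : ℕ → (ℕ → ℝ) → ℝ}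

/-- The basis vector `x n` as an element of Mathlib's space `ℓ_p`. -/
def vector (h : IsLpBasis p.toReal x xs) (hp0 : 0 < p.toReal) (n : ℕ) : ℓ^p(ℕ, ℝ) :=
  ⟨x n, (memℓp_iff_memLpSeq hp0).2 (h.mem n)⟩

/-- The coordinate functional `xs n` as a linear functional on Mathlib's space `ℓ_p`. -/
def coord (h : IsLpBasis p.toReal x xs) (hp0 : 0 < p.toReal) (n : ℕ) :
    Module.Dual ℝ ℓ^p(ℕ, ℝ) where
  toFun f := xs n f
  map_add' f g :=
    h.map_add n f g ((memℓp_iff_memLpSeq hp0).1 f.2) ((memℓp_iff_memLpSeq hp0).1 g.2)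
  map_smul' c f := h.map_smul n c f ((memℓp_iff_memLpSeq hp0).1 f.2)

variable (h : IsLpBasis p.toReal x xs) (hp0 : 0 < p.toReal)
include h hp0

lemma sum_vector_apply (A : Finset ℕ) (c : ℕ → ℝ) (j : ℕ) :
    (∑ n ∈ A, c n • h.vector hp0 n) j = ∑ n ∈ A, c n * x n j := by
  rw [lp.coeFn_sum, Finset.sum_apply]
  rfl

lemma norm_sum_vector (A : Finset ℕ) (c : ℕ → ℝ) :
    ‖∑ n ∈ A, c n • h.vector hp0 n‖ = pNorm p.toReal fun j => ∑ n ∈ A, c n * x n j := by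
  rw [lp_norm_eq_pNorm hp0]
  exact congrArg _ (funext (h.sum_vector_apply hp0 A c))

lemma norm_sub_sum_vector (f : ℓ^p(ℕ, ℝ)) (A : Finset ℕ) (c : ℕ → ℝ) :
    ‖f - ∑ n ∈ A, c n • h.vector hp0 n‖
      = pNorm p.toReal fun j => f j - ∑ n ∈ A, c n * x n j := by
  rw [lp_norm_eq_pNorm hp0]
  exact congrArg _ (funext fun j => congrArg (f j - ·) (h.sum_vector_apply hp0 A c j))

lemma exists_norm_vector_le : ∃ X, ∀ n, ‖h.vector hp0 n‖ ≤ X := by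
  obtain ⟨X, hX⟩ := h.norm_ub
  exact ⟨X, fun n => (lp_norm_eq_pNorm hp0 _).trans_le (hX n)⟩

lemma exists_abs_coord_le : ∃ B ≥ 0, ∀ n f, |h.coord hp0 n f| ≤ B * ‖f‖ := by
  obtain ⟨b, hb⟩ := h.bdd
  refine ⟨max b 0, le_max_right _ _, fun n f => ?_⟩
  calc |xs n f| ≤ b * pNorm p.toReal f := hb n f ((memℓp_iff_memLpSeq hp0).1 f.2)
    _ ≤ max b 0 * ‖f‖ := by
        rw [← lp_norm_eq_pNorm hp0]
        exact mul_le_mul_of_nonneg_right (le_max_left _ _) (lp.norm_nonneg' f)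

lemma exists_lpPowSeminorm_sub_sum_lt (hp1 : p.toReal ≤ 1) (f : ℓ^p(ℕ, ℝ)) {ε : ℝ} (hε : 0 < ε) :
    ∃ (D : Finset ℕ) (c : ℕ → ℝ),
      lpPowSeminorm hp0 hp1 (f - ∑ n ∈ D, c n • h.vector hp0 n) < ε := by
  obtain ⟨D, c, hD⟩ := h.dense f ((memℓp_iff_memLpSeq hp0).1 f.2) (ε ^ p.toReal⁻¹) (by positivity)
  refine ⟨D, c, ?_⟩
  rw [← h.norm_sub_sum_vector hp0] at hD
  exact (Real.lt_rpow_inv_iff_of_pos (lp.norm_nonneg' _) hε.le hp0).1 hD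

lemma exists_isQuasiGreedySystem (hp1 : p.toReal ≤ 1) (hqg : QuasiGreedy p.toReal x xs) :
    ∃ Q, IsQuasiGreedySystem (lpPowSeminorm hp0 hp1) (h.vector hp0) (h.coord hp0) Q := by
  obtain ⟨C, hC, hgreedy⟩ := hqg
  refine ⟨C ^ p.toReal, h.biorth, by positivity, fun f A hA => ?_⟩
  have hle : ‖∑ n ∈ A, h.coord hp0 n f • h.vector hp0 n‖ ≤ C * ‖f‖ := by
    rw [h.norm_sum_vector hp0, lp_norm_eq_pNorm hp0]
    exact hgreedy f ((memℓp_iff_memLpSeq hp0).1 f.2) A hA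
  rw [lpPowSeminorm_apply, lpPowSeminorm_apply,
    ← Real.mul_rpow (by positivity) (lp.norm_nonneg' f)]
  exact Real.rpow_le_rpow (lp.norm_nonneg' _) hle hp0.le

end IsLpBasis

end Bridge

/-- Quasi-greedy bases of `ℓ_p`, `0<p<1`, are almost greedy: the error of the
greedy algorithm is uniformly comparable to the error of the best coordinate
projection of the same cardinality. -/
theorem stmt8 (p : ℝ) (hp0 : 0 < p) (hp1 : p < 1)
    (x : ℕ → ℕ → ℝ) (xs : ℕ → (ℕ → ℝ) → ℝ)
    (hbasis : IsLpBasis p x xs) (hqg : QuasiGreedy p x xs) :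
    ∃ C ≥ (1 : ℝ), ∀ f, MemLpSeq p f → ∀ A : Finset ℕ, 1 ≤ A.card →
      GreedySet (fun n => xs n f) A →
      ∀ B : Finset ℕ, B.card = A.card →
        pNorm p (fun j => f j - ∑ n ∈ A, xs n f * x n j)
          ≤ C * pNorm p (fun j => f j - ∑ n ∈ B, xs n f * x n j) := by
  obtain ⟨q, rfl⟩ : ∃ q : ENNReal, q.toReal = p := ⟨_, ENNReal.toReal_ofReal hp0.le⟩
  obtain ⟨Q, hQ⟩ := hbasis.exists_isQuasiGreedySystem hp0 hp1.le hqg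
  obtain ⟨B, hB, hcoord⟩ := hbasis.exists_abs_coord_le hp0
  obtain ⟨X, hX⟩ := hbasis.exists_norm_vector_le hp0
  obtain ⟨C, hC⟩ := hQ.exists_almost_greedy_lp hp1 hB hcoord hX fun f _ hε =>
    hbasis.exists_lpPowSeminorm_sub_sum_lt hp0 hp1.le f hε
  refine ⟨max 1 C, le_max_left _ _, fun f hf A _ hA B hBA => ?_⟩
  have hbound := hC ⟨f, (memℓp_iff_memLpSeq hp0).2 hf⟩ A B hA hBA.le
  refine le_trans ?_ (mul_le_mul_of_nonneg_right (le_max_right 1 C) ?_)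
  · rwa [hbasis.norm_sub_sum_vector hp0, hbasis.norm_sub_sum_vector hp0] at hbound
  · exact Real.rpow_nonneg (tsum_nonneg fun j => Real.rpow_nonneg (abs_nonneg _) _) _
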